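/- For all ordinals α: (1) ψ₀(α) < Ω; (2) ψ₀(0) = ω; (3) if α ∈ C₀(α) then ψ₀(α+1) = ψ₀(α)·ω; (4) if α ∈ C₀(α) and α < Ω then ψ₀(α) = ω^(1+α); (5) ψ₀(Ω) = ε₀; (6) for α < Ω₂, an ordinal β satisfies β < ψ₀(α) if and only if β ∈ C₀(α) and β < Ω. -/

import Mathlib

noncomputable section

open Ordinal Cardinal

/-- `Ω` : the least uncountable ordinal. -/
def Omega1 : Ordinal := (Cardinal.aleph 1).ord

/-- `Ω₂` : the least ordinal of cardinality `ℵ₂`. -/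
def Omega2 : Ordinal := (Cardinal.aleph 2).ord

/-- An ordinal is additive principal if it is nonzero and closed under addition
of strictly smaller ordinals. -/
def AddPrincipal (γ : Ordinal) : Prop :=
  γ ≠ 0 ∧ ∀ ξ η : Ordinal, ξ < γ → η < γ → ξ + η < γ

/-- `ψ₂ β := ω ^ (Ω₂ + β)`. -/
def psi2 (β : Ordinal) : Ordinal := omega0 ^ (Omega2 + β)

/-- `C₁(α)` : the least set of ordinals containing all ordinals `< Ω`, closed under
`ψ₂`, closed under sums of additive principal members, and containing
`ψ₁ β = min {γ | γ ∉ C₁(β)}` for every `β ∈ C₁(α)` with `β < α` and `β ∈ C₁(β)`. -/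
def C1 (α : Ordinal) : Set Ordinal :=
  ⋂₀ {S : Set Ordinal |
      (∀ β < Omega1, β ∈ S) ∧
      (∀ β ∈ S, psi2 β ∈ S) ∧
      (∀ l : List Ordinal, l ≠ [] → (∀ b ∈ l, b ∈ S ∧ AddPrincipal b) → l.sum ∈ S) ∧
      (∀ β, β ∈ S → β < α → β ∈ C1 β → sInf {γ : Ordinal | γ ∉ C1 β} ∈ S)}
termination_by α
decreasing_by all_goals assumption

/-- The collapsing function `ψ₁`. -/
def psi1 (α : Ordinal) : Ordinal := sInf {γ : Ordinal | γ ∉ C1 α}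

/-- `C₀(α)` : the least set of ordinals containing `0` and `1`, closed under
`ψ₂`, closed under sums of additive principal members, containing `ψ₁ β` for
`β ∈ C₀(α)` with `β ∈ C₁(β)`, and containing `ψ₀ β = min {γ | γ ∉ C₀(β)}`
for every `β ∈ C₀(α)` with `β < α` and `β ∈ C₀(β)`. -/
def C0 (α : Ordinal) : Set Ordinal :=
  ⋂₀ {S : Set Ordinal |
      (0 : Ordinal) ∈ S ∧ (1 : Ordinal) ∈ S ∧
      (∀ β ∈ S, psi2 β ∈ S) ∧
      (∀ l : List Ordinal, l ≠ [] → (∀ b ∈ l, b ∈ S ∧ AddPrincipal b) → l.sum ∈ S) ∧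
      (∀ β ∈ S, β ∈ C1 β → psi1 β ∈ S) ∧
      (∀ β, β ∈ S → β < α → β ∈ C0 β → sInf {γ : Ordinal | γ ∉ C0 β} ∈ S)}
termination_by α
decreasing_by all_goals assumption

/-- The collapsing function `ψ₀`. -/
def psi0 (α : Ordinal) : Ordinal := sInf {γ : Ordinal | γ ∉ C0 α}

/-!
Since `C₀(α)` is generated from `0` and `1` by finitely many finitary operations, it is countable,
so `ψ₀(α) < Ω`. The functions `ψ₁` and `ψ₂` only produce ordinals `≥ Ω`, and sums of ordinals below
an additive principal `δ` stay below `δ`. Hence the part of `C₀(α)` below `Ω` depends only on the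
values `ψ₀(β)` with `β < α` and `β ∈ C₀(β)`: it is an initial segment, and its supremum `ψ₀(α)` is
the least additive principal ordinal greater than `1` and than all those values.

All values up to `Ω` follow from this recursion. Below `ε₀` we have `β < ω^(1+β)`, so every `β < α`
contributes and `ψ₀(α) = ω^(1+α)`. Between `ε₀` and `Ω` no further `β` contributes, because
`β ∈ C₀(β)` would mean `β < ψ₀(β) = ε₀`.
-/

universe u

variable {α β γ δ ξ : Ordinal.{u}}

theorem list_sum_mem_of_add_mem {M : Type*} [AddMonoid M] {S : Set M} (zero_mem : 0 ∈ S)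
    (add_mem : ∀ x ∈ S, ∀ y ∈ S, x + y ∈ S) {l : List M} (hl : ∀ x ∈ l, x ∈ S) : l.sum ∈ S :=
  (⟨⟨S, fun hx hy ↦ add_mem _ hx _ hy⟩, zero_mem⟩ : AddSubmonoid M).list_sum_mem hl

theorem exists_countable_superset_closed {X ι : Type*} [Countable ι] (f : ι → X → X → X)
    {s : Set X} (hs : s.Countable) :
    ∃ t, s ⊆ t ∧ t.Countable ∧ ∀ i, ∀ x ∈ t, ∀ y ∈ t, f i x y ∈ t := by
  let step (t : Set X) : Set X := t ∪ ⋃ i, Set.image2 (f i) t t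
  let stage (n : ℕ) : Set X := step^[n] s
  have stage_succ (n : ℕ) : stage (n + 1) = step (stage n) := Function.iterate_succ_apply' step n s
  have stage_mono : Monotone stage :=
    monotone_nat_of_le_succ fun n ↦ (stage_succ n).symm ▸ Set.subset_union_left
  have stage_countable (n : ℕ) : (stage n).Countable := by
    induction n with
    | zero => exact hs
    | succ n ih =>
      rw [stage_succ]
      exact ih.union (Set.countable_iUnion fun i ↦ ih.image2 ih (f i))
  refine ⟨⋃ n, stage n, Set.subset_iUnion stage 0, Set.countable_iUnion stage_countable, ?_⟩
  intro i x hx y hy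
  obtain ⟨m, hm⟩ := Set.mem_iUnion.1 hx
  obtain ⟨n, hn⟩ := Set.mem_iUnion.1 hy
  refine Set.mem_iUnion.2 ⟨max m n + 1, ?_⟩
  rw [stage_succ]
  exact Or.inr (Set.mem_iUnion.2 ⟨i, Set.mem_image2_of_mem (stage_mono (le_max_left m n) hm)
    (stage_mono (le_max_right m n) hn)⟩)

/-! ### Additive principal ordinals -/

theorem addPrincipal_iff_exists_omega0_opow : AddPrincipal γ ↔ ∃ e : Ordinal, γ = ω ^ e := by
  constructor
  · rintro ⟨hne, hadd⟩
    obtain rfl | ⟨e, rfl⟩ := isPrincipal_add_iff_zero_or_omega0_opow.1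
      fun a b ha hb ↦ hadd a b ha hb
    exacts [absurd rfl hne, ⟨e, rfl⟩]
  · rintro ⟨e, rfl⟩
    exact ⟨opow_ne_zero e omega0_ne_zero, fun _ _ ha hb ↦ isPrincipal_add_omega0_opow e ha hb⟩

theorem addPrincipal_omega0_opow (e : Ordinal.{u}) : AddPrincipal (ω ^ e) :=
  addPrincipal_iff_exists_omega0_opow.2 ⟨e, rfl⟩

namespace AddPrincipal

theorem mul_omega0 (hγ : AddPrincipal γ) : AddPrincipal (γ * ω) := by
  obtain ⟨e, rfl⟩ := addPrincipal_iff_exists_omega0_opow.1 hγ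
  rw [← opow_succ]
  exact addPrincipal_omega0_opow _

theorem mul_omega0_le (hδ : AddPrincipal δ) (h : γ < δ) : γ * ω ≤ δ := by
  rw [mul_le_iff_of_isSuccLimit isSuccLimit_omega0]
  intro b hb
  obtain ⟨n, rfl⟩ := lt_omega0.1 hb
  exact (IsPrincipal.mul_natCast_lt (fun a b ha hb ↦ hδ.2 a b ha hb) h n).le

end AddPrincipal

theorem exists_list_addPrincipal_sum_eq (ξ : Ordinal.{u}) :
    ∃ l : List Ordinal.{u}, (∀ b ∈ l, b ≤ ξ ∧ AddPrincipal b) ∧ l.sum = ξ := by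
  induction ξ using WellFoundedLT.induction with
  | ind ξ ih =>
    obtain rfl | hξ := eq_or_ne ξ 0
    · exact ⟨[], by simp⟩
    have head_le : ω ^ log ω ξ ≤ ξ := opow_log_le_self ω hξ
    obtain ⟨l, hl, hsum⟩ := ih _ (sub_omega0_opow_log_lt hξ)
    refine ⟨ω ^ log ω ξ :: l, List.forall_mem_cons.2 ⟨⟨head_le, addPrincipal_omega0_opow _⟩,
      fun b hb ↦ ⟨(hl b hb).1.trans (Ordinal.sub_le_self _ _), (hl b hb).2⟩⟩, ?_⟩
    rw [List.sum_cons, hsum, Ordinal.add_sub_cancel_of_le head_le]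

/-- If `γ` were not additive principal, its additive principal summands would all be smaller. -/
theorem addPrincipal_of_Iio_subset_of_notMem {S : Set Ordinal.{u}} (zero_mem : 0 ∈ S)
    (sum_mem : ∀ l : List Ordinal, l ≠ [] → (∀ b ∈ l, b ∈ S ∧ AddPrincipal b) → l.sum ∈ S)
    (hlt : Set.Iio γ ⊆ S) (hγ : γ ∉ S) : AddPrincipal γ := by
  by_contra hp
  obtain ⟨l, hl, rfl⟩ := exists_list_addPrincipal_sum_eq γ
  refine hγ (sum_mem l (fun h ↦ hγ (by simpa [h] using zero_mem)) fun b hb ↦ ?_)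
  obtain ⟨hle, hb⟩ := hl b hb
  exact ⟨hlt (hle.lt_of_ne fun h ↦ hp (h ▸ hb)), hb⟩

/-! ### The values of `ψ₁` and `ψ₂` are uncountable -/

theorem Omega1_le_psi2 (β : Ordinal.{u}) : Omega1 ≤ psi2 β :=
  calc Omega1 ≤ Omega2 := ord_le_ord.2 (aleph_le_aleph.2 one_le_two)
    _ ≤ Omega2 + β := le_self_add
    _ ≤ psi2 β := right_le_opow _ one_lt_omega0

theorem isNormal_psi2 : Order.IsNormal psi2.{u} :=
  (isNormal_opow one_lt_omega0).comp (isNormal_add_right Omega2)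

/-- Any fixed point of `ψ₂` above `Ω` and above all `ψ₁(β)` with `β < α` bounds `C₁(α)`. -/
theorem bddAbove_C1 (α : Ordinal.{u}) : BddAbove (C1 α) := by
  obtain ⟨μ, hμ⟩ : BddAbove (psi1 '' Set.Iio α) := bddAbove_of_small
  let κ := nfp psi2 (Order.succ (max μ Omega1))
  have psi2_κ : psi2 κ = κ := nfp_fp isNormal_psi2 _
  have max_lt_κ : max μ Omega1 < κ := Order.succ_le_iff.1 (le_nfp psi2 _)
  have κ_principal : AddPrincipal κ := psi2_κ ▸ addPrincipal_omega0_opow _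
  suffices C1 α ⊆ Set.Iio κ from bddAbove_Iio.mono this
  rw [C1]
  refine Set.sInter_subset_of_mem ⟨?_, ?_, ?_, ?_⟩
  · exact fun β hβ ↦ hβ.trans ((le_max_right _ _).trans_lt max_lt_κ)
  · exact fun β hβ ↦ (isNormal_psi2.strictMono hβ).trans_eq psi2_κ
  · exact fun l _ hl ↦ list_sum_mem_of_add_mem (S := Set.Iio κ)
      (pos_iff_ne_zero.2 κ_principal.1) (fun x hx y hy ↦ κ_principal.2 x y hx hy)
      fun b hb ↦ (hl b hb).1
  · exact fun β _ hβ _ ↦ (hμ ⟨β, hβ, rfl⟩).trans_lt ((le_max_left _ _).trans_lt max_lt_κ)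

theorem psi1_notMem_C1 (α : Ordinal.{u}) : psi1 α ∉ C1 α := by
  obtain ⟨κ, hκ⟩ := bddAbove_C1 α
  exact csInf_mem (s := {γ | γ ∉ C1 α}) ⟨Order.succ κ, fun h ↦ (Order.lt_succ κ).not_ge (hκ h)⟩

theorem Omega1_le_psi1 (α : Ordinal.{u}) : Omega1 ≤ psi1 α := by
  by_contra! hlt
  refine psi1_notMem_C1 α ?_
  rw [C1]
  exact fun S hS ↦ hS.1 _ hlt

/-! ### The sets `C₀(α)` -/

/-- The closure conditions whose least solution is `C₀(α)`. -/
structure IsC0Closed (α : Ordinal.{u}) (S : Set Ordinal.{u}) : Prop where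
  zero_mem : 0 ∈ S
  one_mem : 1 ∈ S
  psi2_mem : ∀ β ∈ S, psi2 β ∈ S
  sum_mem : ∀ l : List Ordinal, l ≠ [] → (∀ b ∈ l, b ∈ S ∧ AddPrincipal b) → l.sum ∈ S
  psi1_mem : ∀ β ∈ S, β ∈ C1 β → psi1 β ∈ S
  psi0_mem : ∀ β ∈ S, β < α → β ∈ C0 β → psi0 β ∈ S

theorem C0_eq_sInter (α : Ordinal.{u}) : C0 α = ⋂₀ {S | IsC0Closed α S} := by
  rw [C0]
  congr 1
  ext S
  exact ⟨fun ⟨h0, h1, h2, h3, h4, h5⟩ ↦ ⟨h0, h1, h2, h3, h4, h5⟩,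
    fun h ↦ ⟨h.zero_mem, h.one_mem, h.psi2_mem, h.sum_mem, h.psi1_mem, h.psi0_mem⟩⟩

theorem IsC0Closed.C0_subset {S : Set Ordinal.{u}} (hS : IsC0Closed α S) : C0 α ⊆ S := by
  rw [C0_eq_sInter]
  exact Set.sInter_subset_of_mem hS

theorem isC0Closed_C0 (α : Ordinal.{u}) : IsC0Closed α (C0 α) := by
  rw [C0_eq_sInter]
  exact {
    zero_mem := fun S hS ↦ hS.zero_mem
    one_mem := fun S hS ↦ hS.one_mem
    psi2_mem := fun β hβ S hS ↦ hS.psi2_mem β (hβ S hS)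
    sum_mem := fun l hne hl S hS ↦ hS.sum_mem l hne fun b hb ↦ ⟨(hl b hb).1 S hS, (hl b hb).2⟩
    psi1_mem := fun β hβ hβ' S hS ↦ hS.psi1_mem β (hβ S hS) hβ'
    psi0_mem := fun β hβ hlt hβ' S hS ↦ hS.psi0_mem β (hβ S hS) hlt hβ' }

theorem C0_mono (h : α ≤ β) : C0 α ⊆ C0 β :=
  IsC0Closed.C0_subset { isC0Closed_C0 β with
    psi0_mem := fun γ hγ hlt ↦ (isC0Closed_C0 β).psi0_mem γ hγ (hlt.trans_le h) }

theorem countable_C0 (α : Ordinal.{u}) : (C0 α).Countable := by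
  obtain ⟨t, hst, ht, hclosed⟩ := exists_countable_superset_closed
    ![(· + ·), fun x _ ↦ psi0 x, fun x _ ↦ psi1 x, fun x _ ↦ psi2 x]
    (s := {(0 : Ordinal.{u}), 1}) (Set.toFinite _).countable
  refine ht.mono (IsC0Closed.C0_subset {
    zero_mem := hst (Or.inl rfl)
    one_mem := hst (Or.inr rfl)
    psi2_mem := fun β hβ ↦ hclosed 3 β hβ β hβ
    sum_mem := fun l _ hl ↦
      list_sum_mem_of_add_mem (hst (Or.inl rfl)) (hclosed 0) fun b hb ↦ (hl b hb).1
    psi1_mem := fun β hβ _ ↦ hclosed 2 β hβ β hβ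
    psi0_mem := fun β hβ _ _ ↦ hclosed 1 β hβ β hβ })

/-! ### The recursion for `ψ₀` -/

theorem not_countable_Iio_Omega1 : ¬ (Set.Iio Omega1.{u}).Countable := by
  rw [← le_aleph0_iff_set_countable, Cardinal.mk_Iio_ordinal, Omega1, card_ord, lift_aleph]
  simp

theorem exists_lt_Omega1_notMem_C0 (α : Ordinal.{u}) : ∃ γ < Omega1, γ ∉ C0 α := by
  by_contra! h
  exact not_countable_Iio_Omega1 ((countable_C0 α).mono h)

theorem psi0_notMem_C0 (α : Ordinal.{u}) : psi0 α ∉ C0 α := by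
  obtain ⟨γ, -, hγ⟩ := exists_lt_Omega1_notMem_C0 α
  exact csInf_mem (s := {γ | γ ∉ C0 α}) ⟨γ, hγ⟩

theorem psi0_lt_Omega1 (α : Ordinal.{u}) : psi0 α < Omega1 := by
  obtain ⟨γ, hlt, hγ⟩ := exists_lt_Omega1_notMem_C0 α
  exact (csInf_le' hγ).trans_lt hlt

theorem mem_C0_of_lt_psi0 (h : β < psi0 α) : β ∈ C0 α :=
  not_not.1 (notMem_of_lt_csInf' h)

theorem monotone_psi0 : Monotone psi0.{u} := fun α β h ↦ by
  by_contra! hlt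
  exact psi0_notMem_C0 β (C0_mono h (mem_C0_of_lt_psi0 hlt))

theorem psi0_lt_psi0_of_mem_C0 (h : β < α) (hβ : β ∈ C0 β) : psi0 β < psi0 α :=
  (monotone_psi0 h.le).lt_of_ne fun heq ↦
    psi0_notMem_C0 α (heq ▸ (isC0Closed_C0 α).psi0_mem β (C0_mono h.le hβ) h hβ)

theorem one_lt_psi0 (α : Ordinal.{u}) : 1 < psi0 α := by
  by_contra! h
  obtain h | h := Order.le_one_iff.1 h
  · exact psi0_notMem_C0 α (h ▸ (isC0Closed_C0 α).zero_mem)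
  · exact psi0_notMem_C0 α (h ▸ (isC0Closed_C0 α).one_mem)

theorem addPrincipal_psi0 (α : Ordinal.{u}) : AddPrincipal (psi0 α) :=
  addPrincipal_of_Iio_subset_of_notMem (isC0Closed_C0 α).zero_mem (isC0Closed_C0 α).sum_mem
    (fun _ ↦ mem_C0_of_lt_psi0) (psi0_notMem_C0 α)

theorem C0_inter_Iio_Omega1_subset (hδ : AddPrincipal δ) (one_lt : 1 < δ)
    (hlt : ∀ β < α, β ∈ C0 β → psi0 β < δ) : C0 α ∩ Set.Iio Omega1 ⊆ Set.Iio δ := by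
  let S : Set Ordinal := {γ | γ < Omega1 → γ < δ}
  have zero_mem : 0 ∈ S := fun _ ↦ zero_lt_one.trans one_lt
  have add_mem : ∀ x ∈ S, ∀ y ∈ S, x + y ∈ S := fun x hx y hy h ↦
    hδ.2 x y (hx (le_self_add.trans_lt h)) (hy (le_add_self.trans_lt h))
  have C0_subset_S : C0 α ⊆ S := IsC0Closed.C0_subset {
    zero_mem := zero_mem
    one_mem := fun _ ↦ one_lt
    psi2_mem := fun β _ h ↦ absurd h (Omega1_le_psi2 β).not_gt
    sum_mem := fun l _ hl ↦ list_sum_mem_of_add_mem zero_mem add_mem fun b hb ↦ (hl b hb).1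
    psi1_mem := fun β _ _ h ↦ absurd h (Omega1_le_psi1 β).not_gt
    psi0_mem := fun β _ h hβ _ ↦ hlt β h hβ }
  exact fun γ ⟨hγ, hγΩ⟩ ↦ C0_subset_S hγ hγΩ

theorem lt_psi0_iff : β < psi0 α ↔ β ∈ C0 α ∧ β < Omega1 :=
  ⟨fun h ↦ ⟨mem_C0_of_lt_psi0 h, h.trans (psi0_lt_Omega1 α)⟩, fun h ↦
    C0_inter_Iio_Omega1_subset (addPrincipal_psi0 α) (one_lt_psi0 α)
      (fun _ ↦ psi0_lt_psi0_of_mem_C0) h⟩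

theorem psi0_le (hδ : AddPrincipal δ) (one_lt : 1 < δ)
    (hlt : ∀ β < α, β ∈ C0 β → psi0 β < δ) : psi0 α ≤ δ :=
  le_of_forall_lt fun _ hγ ↦ C0_inter_Iio_Omega1_subset hδ one_lt hlt (lt_psi0_iff.1 hγ)

theorem psi0_add_one (hα : α ∈ C0 α) : psi0 (α + 1) = psi0 α * ω := by
  have lt_mul_omega0 : psi0 α < psi0 α * ω :=
    lt_mul_of_one_lt_right (zero_lt_one.trans (one_lt_psi0 α)) one_lt_omega0
  refine le_antisymm (psi0_le (addPrincipal_psi0 α).mul_omega0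
    ((one_lt_psi0 α).trans lt_mul_omega0) fun β hβ _ ↦ ?_) ?_
  · exact (monotone_psi0 (Order.lt_add_one_iff.1 hβ)).trans_lt lt_mul_omega0
  · exact (addPrincipal_psi0 (α + 1)).mul_omega0_le (psi0_lt_psi0_of_mem_C0 (lt_add_one α) hα)

/-! ### The values of `ψ₀` up to `Ω` -/

theorem isLeast_epsilon_zero : IsLeast {ξ : Ordinal.{u} | ω ^ ξ = ξ} ε₀ :=
  ⟨omega0_opow_epsilon 0, fun _ hξ ↦ epsilon_zero_le_of_omega0_opow_le (le_of_eq hξ)⟩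

theorem lt_omega0_opow_one_add_of_lt_epsilon_zero (h : ξ < ε₀) : ξ < ω ^ (1 + ξ) :=
  calc ξ < ω ^ ξ := not_le.1 fun hle ↦ h.not_ge (epsilon_zero_le_of_omega0_opow_le hle)
    _ ≤ ω ^ (1 + ξ) := opow_le_opow_right omega0_pos le_add_self

theorem add_le_of_forall_add_lt {a b c : Ordinal.{u}} (hac : a ≤ c) (h : ∀ d < b, a + d < c) :
    a + b ≤ c := by
  obtain rfl | hb := eq_or_ne b 0
  · rwa [add_zero]
  · exact (add_le_iff hb).2 h

theorem psi0_eq_omega0_opow (hα : α ≤ ε₀) : psi0 α = ω ^ (1 + α) := by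
  induction α using WellFoundedLT.induction with
  | ind α ih =>
    have psi0_eq (β : Ordinal) (hβ : β < α) : psi0 β = ω ^ (1 + β) := ih β hβ (hβ.le.trans hα)
    have mem_C0 (β : Ordinal) (hβ : β < α) : β ∈ C0 β := mem_C0_of_lt_psi0 <|
      (psi0_eq β hβ).symm ▸ lt_omega0_opow_one_add_of_lt_epsilon_zero (hβ.trans_le hα)
    apply le_antisymm
    · refine psi0_le (addPrincipal_omega0_opow _) ?_ fun β hβ _ ↦ ?_
      · exact one_lt_opow.2 ⟨one_lt_omega0, by simp⟩
      · rw [psi0_eq β hβ]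
        exact (opow_lt_opow_iff_right one_lt_omega0).2 (by simpa using hβ)
    · obtain ⟨e, he⟩ := addPrincipal_iff_exists_omega0_opow.1 (addPrincipal_psi0 α)
      rw [he]
      refine opow_le_opow_right omega0_pos (add_le_of_forall_add_lt ?_ fun β hβ ↦ ?_)
      · rw [Order.one_le_iff_ne_zero]
        rintro rfl
        exact (one_lt_psi0 α).ne' (he.trans (opow_zero ω))
      · rw [← opow_lt_opow_iff_right one_lt_omega0, ← psi0_eq β hβ, ← he]
        exact psi0_lt_psi0_of_mem_C0 hβ (mem_C0 β hβ)

theorem psi0_epsilon_zero : psi0 ε₀ = ε₀ := by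
  rw [psi0_eq_omega0_opow le_rfl, one_add_of_omega0_le (omega0_lt_epsilon 0).le,
    omega0_opow_epsilon]

theorem psi0_eq_epsilon_zero (hα : ε₀ ≤ α) (hαΩ : α ≤ Omega1) : psi0 α = ε₀ := by
  induction α using WellFoundedLT.induction with
  | ind α ih =>
    refine le_antisymm (psi0_le ?_ ?_ fun β hβ hβC ↦ ?_)
      (psi0_epsilon_zero.ge.trans (monotone_psi0 hα))
    · exact omega0_opow_epsilon 0 ▸ addPrincipal_omega0_opow _
    · exact one_lt_omega0.trans (omega0_lt_epsilon 0)
    · have β_lt_psi0 : β < psi0 β := lt_psi0_iff.2 ⟨hβC, hβ.trans_le hαΩ⟩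
      obtain hlt | hge := lt_or_ge β ε₀
      · exact (psi0_lt_psi0_of_mem_C0 hlt hβC).trans_eq psi0_epsilon_zero
      · rw [ih β hβ hge (hβ.le.trans hαΩ)] at β_lt_psi0
        exact absurd hge β_lt_psi0.not_ge

theorem lt_epsilon_zero_of_mem_C0 (hα : α ∈ C0 α) (hαΩ : α < Omega1) : α < ε₀ := by
  by_contra! hge
  have α_lt_psi0 : α < psi0 α := lt_psi0_iff.2 ⟨hα, hαΩ⟩
  rw [psi0_eq_epsilon_zero hge hαΩ.le] at α_lt_psi0
  exact α_lt_psi0.not_ge hge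

theorem psi0_properties_general :
    (∀ α : Ordinal, psi0 α < Omega1) ∧
    (psi0 0 = omega0) ∧
    (∀ α : Ordinal, α ∈ C0 α → psi0 (α + 1) = psi0 α * omega0) ∧
    (∀ α : Ordinal, α ∈ C0 α → α < Omega1 → psi0 α = omega0 ^ (1 + α)) ∧
    (psi0 Omega1 = sInf {ξ : Ordinal | omega0 ^ ξ = ξ}) ∧
    (∀ α β : Ordinal, β < psi0 α ↔ β ∈ C0 α ∧ β < Omega1) := by
  refine ⟨psi0_lt_Omega1, ?_, fun _ ↦ psi0_add_one, ?_, ?_, fun _ _ ↦ lt_psi0_iff⟩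
  · simpa using psi0_eq_omega0_opow (epsilon_pos 0).le
  · exact fun α hα hαΩ ↦ psi0_eq_omega0_opow (lt_epsilon_zero_of_mem_C0 hα hαΩ).le
  · have epsilon_zero_lt_Omega1 : ε₀ < Omega1 := psi0_epsilon_zero ▸ psi0_lt_Omega1 ε₀
    rw [isLeast_epsilon_zero.csInf_eq, psi0_eq_epsilon_zero epsilon_zero_lt_Omega1.le le_rfl]

/-- Properties of the function `ψ₀`. -/
theorem psi0_properties :
    (∀ α : Ordinal, psi0 α < Omega1) ∧
    (psi0 0 = omega0) ∧
    (∀ α : Ordinal, α ∈ C0 α → psi0 (α + 1) = psi0 α * omega0) ∧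
    (∀ α : Ordinal, α ∈ C0 α → α < Omega1 → psi0 α = omega0 ^ (1 + α)) ∧
    (psi0 Omega1 = sInf {ξ : Ordinal | omega0 ^ ξ = ξ}) ∧
    (∀ α β : Ordinal, α < Omega2 → (β < psi0 α ↔ β ∈ C0 α ∧ β < Omega1)) := by
  obtain ⟨lt_Omega1, zero, add_one, eq_opow, at_Omega1, lt_iff⟩ := psi0_properties_general
  exact ⟨lt_Omega1, zero, add_one, eq_opow, at_Omega1, fun α β _ ↦ lt_iff α β⟩

end
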